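/- (Converse for deterministic power-constrained measurement matrices; equivalent form of Theorem 2 proved in Appendix B) Fix k ≥ 1, l ≥ 1, σa² > 0, σz² > 0, and W ∈ ℝ^{k×l} with all entries nonzero. Suppose there exist a sequence of deterministic matrices A^{(m)} ∈ ℝ^{n_m×m} satisfying the power constraint ‖A^{(m)}‖_F²/(n_m·m) ≤ σa², and a sequence of support recovery maps d^{(m)} : ℝ^{n_m×l} → 2^{[m]}, such that P{ d^{(m)}(A^{(m)} X(W,S) + Z) ≠ supp(X(W,S)) } → 0 as m → ∞ (probability over the random support S and the Gaussian noise Z). Then limsup_{m→∞} (log m)/n_m ≤ c(W). -/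

import Mathlib

open MeasureTheory ProbabilityTheory Matrix Filter
open scoped NNReal ENNReal

noncomputable section

/-- i.i.d. `N(0, v)` entries on an `n × m` array of reals. -/
def gaussMat (n m : ℕ) (v : ℝ≥0) : Measure (Fin n → Fin m → ℝ) :=
  Measure.pi fun _ : Fin n => Measure.pi fun _ : Fin m => gaussianReal 0 v

instance embMS (k m : ℕ) : MeasurableSpace (Fin k ↪ Fin m) := ⊤

/-- Uniform distribution on ordered `k`-tuples of distinct indices in `[m]`,
encoded as embeddings `Fin k ↪ Fin m`. -/
def uniformEmb (k m : ℕ) : Measure (Fin k ↪ Fin m) :=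
  ((Fintype.card (Fin k ↪ Fin m) : ℝ≥0))⁻¹ • Measure.count

/-- The sparse signal `X(W, S)`: row `S j` equals the `j`-th row of `W`, other rows zero. -/
def signal {k l m : ℕ} (W : Matrix (Fin k) (Fin l) ℝ) (s : Fin k ↪ Fin m) :
    Matrix (Fin m) (Fin l) ℝ :=
  Matrix.of fun i j => ∑ a : Fin k, if s a = i then W a j else 0

/-- The support `{S_1, …, S_k}` of the sparse signal. -/
def suppS {k m : ℕ} (s : Fin k ↪ Fin m) : Finset (Fin m) :=
  Finset.univ.map s

/-- Average error probability of the support recovery map `d`, over the random support,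
the Gaussian measurement matrix (i.i.d. `N(0, va)` entries) and the Gaussian noise
(i.i.d. `N(0, vz)` entries), for the measurement model `Y = A · X(W,S) + Z`. -/
def errProb (k l m n : ℕ) (va vz : ℝ≥0) (W : Matrix (Fin k) (Fin l) ℝ)
    (d : Matrix (Fin n) (Fin l) ℝ → Finset (Fin m)) : ℝ≥0∞ :=
  ((uniformEmb k m).prod ((gaussMat n m va).prod (gaussMat n l vz)))
    {p | d (Matrix.of p.2.1 * signal W p.1 + Matrix.of p.2.2) ≠ suppS p.1}

/-- `W_T^⊺ W_T` for a subset `T` of the rows of `W`. -/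
def gramSub {k l : ℕ} (W : Matrix (Fin k) (Fin l) ℝ) (T : Finset (Fin k)) :
    Matrix (Fin l) (Fin l) ℝ :=
  (W.submatrix (fun i : T => (i : Fin k)) id)ᵀ * W.submatrix (fun i : T => (i : Fin k)) id

/-- `c(W) = min_{∅ ≠ T ⊆ [k]} (1 / (2|T|)) log₂ det(I + (σa²/σz²) W_T^⊺ W_T)`. -/
def cW {k l : ℕ} (va vz : ℝ≥0) (W : Matrix (Fin k) (Fin l) ℝ) : ℝ :=
  ⨅ T : {T : Finset (Fin k) // T.Nonempty},
    (1 / (2 * ((T : Finset (Fin k)).card : ℝ))) *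
      Real.logb 2 (Matrix.det (1 + ((va : ℝ) / (vz : ℝ)) • gramSub W (T : Finset (Fin k))))

/-- Error probability for a deterministic measurement matrix `A`, averaged over the random
support and the Gaussian noise (i.i.d. `N(0, vz)` entries), for `Y = A · X(W,S) + Z`. -/
def errProbDet (k l m n : ℕ) (vz : ℝ≥0) (W : Matrix (Fin k) (Fin l) ℝ)
    (A : Matrix (Fin n) (Fin m) ℝ) (d : Matrix (Fin n) (Fin l) ℝ → Finset (Fin m)) : ℝ≥0∞ :=
  ((uniformEmb k m).prod (gaussMat n l vz))
    {p | d (A * signal W p.1 + Matrix.of p.2) ≠ suppS p.1}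


lemma pi_wd {ι E : Type*} [Fintype ι] [MeasurableSpace E] (μ : Measure E) [SigmaFinite μ]
    (f : E → ℝ) (h0 : ∀ x, 0 ≤ f x) (hi : Integrable f μ) :
    Measure.pi (fun _ : ι => μ.withDensity (fun x => ENNReal.ofReal (f x))) =
      (Measure.pi fun _ : ι => μ).withDensity (fun x => ENNReal.ofReal (∏ i, f (x i))) := by
  have : IsFiniteMeasure (μ.withDensity (fun x => ENNReal.ofReal (f x))) :=
    isFiniteMeasure_withDensity_ofReal hi.2
  refine Measure.pi_eq ?_
  intro s hs
  rw [withDensity_apply _ (MeasurableSet.univ_pi hs),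
    ← lintegral_indicator (MeasurableSet.univ_pi hs)]
  have h1 : ∀ x : ι → E, (Set.univ.pi s).indicator
      (fun x => ENNReal.ofReal (∏ i, f (x i))) x =
      ENNReal.ofReal (∏ i, (s i).indicator f (x i)) := by
    intro x
    by_cases hx : x ∈ Set.univ.pi s
    · rw [Set.indicator_of_mem hx]
      congr 1
      refine Finset.prod_congr rfl fun i _ => ?_
      rw [Set.indicator_of_mem (hx i trivial)]
    · rw [Set.indicator_of_notMem hx]
      simp only [Set.mem_pi, Set.mem_univ, true_imp_iff, not_forall] at hx
      obtain ⟨i, hi⟩ := hx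
      rw [Finset.prod_eq_zero (Finset.mem_univ i)]
      · simp
      · rw [Set.indicator_of_notMem hi]
  simp_rw [h1]
  rw [← ofReal_integral_eq_lintegral_ofReal]
  · rw [integral_fintype_prod_eq_prod (fun i => (s i).indicator f), ENNReal.ofReal_prod_of_nonneg]
    · refine Finset.prod_congr rfl fun i _ => ?_
      rw [withDensity_apply _ (hs i), integral_indicator (hs i),
        ofReal_integral_eq_lintegral_ofReal hi.integrableOn (ae_of_all _ h0)]
    · intro i _
      exact integral_nonneg fun x => Set.indicator_nonneg (fun x _ => h0 x) x
  · exact Integrable.fintype_prod (f := fun i => (s i).indicator f)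
      fun i => hi.indicator (hs i)
  · exact ae_of_all _ fun x => Finset.prod_nonneg fun i _ =>
      Set.indicator_nonneg (fun x _ => h0 x) _

def prow (l : ℕ) (v : ℝ≥0) (x : Fin l → ℝ) : ℝ := ∏ j, gaussianPDFReal 0 v (x j)

lemma prow_pos {l : ℕ} {v : ℝ≥0} (hv : v ≠ 0) (x : Fin l → ℝ) : 0 < prow l v x :=
  Finset.prod_pos fun _ _ => gaussianPDFReal_pos _ _ _ hv

lemma prow_meas (l : ℕ) (v : ℝ≥0) : Measurable (prow l v) := by
  unfold prow
  exact Finset.measurable_prod _ fun i _ =>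
    (measurable_gaussianPDFReal 0 v).comp (measurable_pi_apply i)

lemma prow_int (l : ℕ) (v : ℝ≥0) : Integrable (prow l v) := by
  unfold prow
  exact Integrable.fintype_prod (f := fun _ => gaussianPDFReal 0 v)
    (μ := fun _ => volume) fun i => integrable_gaussianPDFReal 0 v

lemma prow_integral (l : ℕ) {v : ℝ≥0} (hv : v ≠ 0) : ∫ x, prow l v x = 1 := by
  unfold prow
  rw [integral_fintype_prod_volume_eq_prod (fun _ : Fin l => gaussianPDFReal 0 v)]
  simp [integral_gaussianPDFReal_eq_one 0 hv]

lemma gaussMat_eq (n l : ℕ) {v : ℝ≥0} (hv : v ≠ 0) :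
    gaussMat n l v = (volume : Measure (Fin n → Fin l → ℝ)).withDensity
      (fun z => ENNReal.ofReal (∏ i, prow l v (z i))) := by
  unfold gaussMat
  have h1 : (Measure.pi fun _ : Fin l => gaussianReal 0 v) =
      (volume : Measure (Fin l → ℝ)).withDensity (fun x => ENNReal.ofReal (prow l v x)) := by
    rw [gaussianReal_of_var_ne_zero 0 hv]
    exact pi_wd volume (gaussianPDFReal 0 v)
      (gaussianPDFReal_nonneg 0 v) (integrable_gaussianPDFReal 0 v)
  rw [h1]
  exact pi_wd volume (prow l v) (fun x => (prow_pos hv x).le) (prow_int l v)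

instance gaussMat_prob (n l : ℕ) (v : ℝ≥0) : IsProbabilityMeasure (gaussMat n l v) := by
  unfold gaussMat; infer_instance

def qrow {l : ℕ} (v : ℝ≥0) (M : Matrix (Fin l) (Fin l) ℝ) (x : Fin l → ℝ) : ℝ :=
  |M.det| * prow l v (M *ᵥ x)

lemma qrow_hasInt {l : ℕ} {v : ℝ≥0} (hv : v ≠ 0) (M : Matrix (Fin l) (Fin l) ℝ)
    (hM : M.det ≠ 0) : Integrable (qrow v M) ∧ ∫ x, qrow v M x = 1 := by
  have hmap := Real.map_matrix_volume_pi_eq_smul_volume_pi hM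
  have hmeas : Measurable (fun x : Fin l → ℝ => M *ᵥ x) :=
    (Continuous.matrix_mulVec continuous_const continuous_id).measurable
  have hmap' : Measure.map (fun x : Fin l → ℝ => M *ᵥ x) volume =
      ENNReal.ofReal |M.det⁻¹| • volume := by
    rw [← hmap]; rfl
  have hint : Integrable (fun x => prow l v (M *ᵥ x)) := by
    have : Integrable (prow l v) (Measure.map (fun x : Fin l → ℝ => M *ᵥ x) volume) := by
      rw [hmap']
      exact (prow_int l v).smul_measure ENNReal.ofReal_ne_top
    exact this.comp_measurable hmeas
  refine ⟨hint.const_mul _, ?_⟩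
  unfold qrow
  rw [integral_const_mul]
  have : ∫ x, prow l v (M *ᵥ x) = ∫ y, prow l v y ∂(Measure.map (fun x : Fin l → ℝ => M *ᵥ x) volume) := by
    rw [integral_map hmeas.aemeasurable (prow_meas l v).aestronglyMeasurable]
  rw [this, hmap', integral_smul_measure, prow_integral l hv]
  rw [ENNReal.toReal_ofReal (abs_nonneg _), abs_inv, smul_eq_mul, mul_one]
  exact mul_inv_cancel₀ (abs_ne_zero.mpr hM)

def qmat {n l : ℕ} (v : ℝ≥0) (M : Matrix (Fin l) (Fin l) ℝ) (x : Fin n → Fin l → ℝ) : ℝ :=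
  ∏ i, qrow v M (x i)

lemma qmat_hasInt (n : ℕ) {l : ℕ} {v : ℝ≥0} (hv : v ≠ 0) (M : Matrix (Fin l) (Fin l) ℝ)
    (hM : M.det ≠ 0) : Integrable (qmat (n := n) v M) ∧ ∫ x, qmat (n := n) v M x = 1 := by
  obtain ⟨h1, h2⟩ := qrow_hasInt hv M hM
  constructor
  · exact Integrable.fintype_prod (f := fun _ => qrow v M)
      (μ := fun _ => volume) fun i => h1
  · unfold qmat
    rw [integral_fintype_prod_volume_eq_prod (fun _ : Fin n => qrow v M)]
    simp [h2]

lemma qmat_pos {n l : ℕ} {v : ℝ≥0} (hv : v ≠ 0) {M : Matrix (Fin l) (Fin l) ℝ}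
    (hM : M.det ≠ 0) (x : Fin n → Fin l → ℝ) : 0 < qmat v M x :=
  Finset.prod_pos fun _ _ => mul_pos (abs_pos.mpr hM) (prow_pos hv _)

/-- log-likelihood ratio. -/
def logR {n l : ℕ} (v : ℝ≥0) (M : Matrix (Fin l) (Fin l) ℝ) (δ z : Fin n → Fin l → ℝ) : ℝ :=
  ∑ i, (Real.log |M.det| + (z i ⬝ᵥ z i - (z i + δ i) ⬝ᵥ ((Mᵀ * M) *ᵥ (z i + δ i))) / (2 * v))

lemma log_prow {l : ℕ} {v : ℝ≥0} (hv : v ≠ 0) (x : Fin l → ℝ) :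
    Real.log (prow l v x) = l * Real.log ((Real.sqrt (2 * Real.pi * v))⁻¹) - (x ⬝ᵥ x) / (2 * v) := by
  unfold prow
  rw [Real.log_prod (fun i _ => (gaussianPDFReal_pos _ _ _ hv).ne')]
  have : ∀ i, Real.log (gaussianPDFReal 0 v (x i)) =
      Real.log ((Real.sqrt (2 * Real.pi * v))⁻¹) - (x i * x i) / (2 * v) := by
    intro i
    rw [gaussianPDFReal_def]
    have hv' : (0:ℝ) < v := by positivity
    rw [Real.log_mul (by positivity) (by positivity), Real.log_exp]
    ring
  simp_rw [this]
  rw [Finset.sum_sub_distrib, ← Finset.sum_div]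
  simp [dotProduct]

lemma llr_eq {n l : ℕ} {v : ℝ≥0} (hv : v ≠ 0) {M : Matrix (Fin l) (Fin l) ℝ}
    (hM : M.det ≠ 0) (δ z : Fin n → Fin l → ℝ) :
    logR v M δ z = Real.log (qmat v M (z + δ) / ∏ i, prow l v (z i)) := by
  rw [Real.log_div (qmat_pos hv hM _).ne' (Finset.prod_pos fun i _ => prow_pos hv _).ne']
  unfold qmat qrow
  rw [Real.log_prod (fun i _ => (mul_pos (abs_pos.mpr hM) (prow_pos hv _)).ne'),
    Real.log_prod (fun i _ => (prow_pos hv _).ne'), ← Finset.sum_sub_distrib]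
  unfold logR
  refine Finset.sum_congr rfl fun i _ => ?_
  rw [Real.log_mul (abs_pos.mpr hM).ne' (prow_pos hv _).ne', log_prow hv, log_prow hv]
  have : (M *ᵥ (z + δ) i) ⬝ᵥ (M *ᵥ (z + δ) i) =
      (z i + δ i) ⬝ᵥ ((Mᵀ * M) *ᵥ (z i + δ i)) := by
    change (M *ᵥ (z i + δ i)) ⬝ᵥ (M *ᵥ (z i + δ i)) = _
    rw [Matrix.dotProduct_mulVec, ← Matrix.mulVec_transpose, Matrix.mulVec_mulVec, dotProduct_comm]
  rw [this]
  ring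

lemma channel {n l : ℕ} {v : ℝ≥0} (hv : v ≠ 0) {M : Matrix (Fin l) (Fin l) ℝ}
    (hM : M.det ≠ 0) (δ : Fin n → Fin l → ℝ) (G : Set (Fin n → Fin l → ℝ)) (hG : MeasurableSet G)
    (lam : ℝ) (hI : Integrable (logR v M δ) (gaussMat n l v)) :
    lam * (gaussMat n l v).real G ≤ - ∫ z, logR v M δ z ∂(gaussMat n l v) +
      Real.exp lam * ∫ z in G, qmat v M (z + δ) := by
  obtain ⟨hq1, hq2⟩ := qmat_hasInt n hv M hM
  have hqs : Integrable (fun z => qmat (n := n) v M (z + δ)) := hq1.comp_add_right δ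
  have hqs2 : ∫ z, qmat (n := n) v M (z + δ) = 1 := by
    rw [integral_add_right_eq_self (fun z => qmat (n := n) v M z) δ, hq2]
  set p : (Fin n → Fin l → ℝ) → ℝ := fun z => ∏ i, prow l v (z i) with hp
  have hp0 : ∀ z, 0 < p z := fun z => Finset.prod_pos fun i _ => prow_pos hv _
  have hpm : Measurable p := Finset.measurable_prod _ fun i _ =>
    (prow_meas l v).comp (measurable_pi_apply i)
  set r : (Fin n → Fin l → ℝ) → ℝ := fun z => qmat v M (z + δ) / p z with hr
  have hr0 : ∀ z, 0 < r z := fun z => div_pos (qmat_pos hv hM _) (hp0 z)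
  have hpr : ∀ z, (ENNReal.ofReal (p z)).toReal • r z = qmat v M (z + δ) := by
    intro z
    rw [ENNReal.toReal_ofReal (hp0 z).le, smul_eq_mul]
    exact mul_div_cancel₀ _ (hp0 z).ne'
  have hmd : Measurable fun z => ENNReal.ofReal (p z) := hpm.ennreal_ofReal
  have hri : Integrable r (gaussMat n l v) := by
    rw [gaussMat_eq n l hv, integrable_withDensity_iff_integrable_smul' hmd
      (ae_of_all _ fun z => ENNReal.ofReal_lt_top)]
    exact hqs.congr (ae_of_all _ fun z => (hpr z).symm)
  have hr1 : ∫ z, r z ∂(gaussMat n l v) = 1 := by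
    rw [gaussMat_eq n l hv, integral_withDensity_eq_integral_toReal_smul hmd
      (ae_of_all _ fun z => ENNReal.ofReal_lt_top)]
    rw [← hqs2]
    exact integral_congr_ae (ae_of_all _ hpr)
  have hrG : ∫ z in G, r z ∂(gaussMat n l v) = ∫ z in G, qmat v M (z + δ) := by
    rw [gaussMat_eq n l hv, restrict_withDensity hG, integral_withDensity_eq_integral_toReal_smul hmd
      (ae_of_all _ fun z => ENNReal.ofReal_lt_top)]
    exact integral_congr_ae (ae_of_all _ hpr)
  have hpt : ∀ z, lam * G.indicator 1 z + logR v M δ z ≤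
      r z + Real.exp lam * G.indicator r z - 1 := by
    intro z
    rw [llr_eq hv hM]
    change _ + Real.log (r z) ≤ _
    by_cases hz : z ∈ G
    · have h := Real.log_le_sub_one_of_pos (mul_pos (Real.exp_pos lam) (hr0 z))
      rw [Real.log_mul (Real.exp_pos _).ne' (hr0 z).ne', Real.log_exp] at h
      simp only [Set.indicator_of_mem hz, Pi.one_apply]
      linarith [hr0 z]
    · have h := Real.log_le_sub_one_of_pos (hr0 z)
      simp only [Set.indicator_of_notMem hz]
      linarith
  have hi1 : Integrable (fun z => lam * G.indicator 1 z) (gaussMat n l v) :=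
    ((integrable_const (1:ℝ)).indicator hG).const_mul lam
  have hi2 : Integrable (fun z => Real.exp lam * G.indicator r z) (gaussMat n l v) :=
    (hri.indicator hG).const_mul _
  have := integral_mono (hi1.add hI) ((hri.add hi2).sub (integrable_const 1)) hpt
  rw [integral_add' hi1 hI, integral_sub' (hri.add hi2) (integrable_const 1),
    integral_add' hri hi2, integral_const_mul, integral_const_mul, integral_indicator_one hG,
    integral_indicator hG, hr1, hrG] at this
  simp at this
  linarith

def HasI {Ω : Type*} [MeasurableSpace Ω] (μ : Measure Ω) (f : Ω → ℝ) (c : ℝ) : Prop :=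
  Integrable f μ ∧ ∫ x, f x ∂μ = c

lemma HasI.add {Ω : Type*} [MeasurableSpace Ω] {μ : Measure Ω} {f g : Ω → ℝ} {c d : ℝ}
    (hf : HasI μ f c) (hg : HasI μ g d) : HasI μ (fun x => f x + g x) (c + d) :=
  ⟨hf.1.add hg.1, by rw [integral_add hf.1 hg.1, hf.2, hg.2]⟩

lemma HasI.cmul {Ω : Type*} [MeasurableSpace Ω] {μ : Measure Ω} {f : Ω → ℝ} {c : ℝ}
    (a : ℝ) (hf : HasI μ f c) : HasI μ (fun x => a * f x) (a * c) :=
  ⟨hf.1.const_mul a, by rw [integral_const_mul, hf.2]⟩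

lemma HasI.sum {Ω ι : Type*} [MeasurableSpace Ω] {μ : Measure Ω} (s : Finset ι) {f : ι → Ω → ℝ}
    {c : ι → ℝ} (hf : ∀ i ∈ s, HasI μ (f i) (c i)) :
    HasI μ (fun x => ∑ i ∈ s, f i x) (∑ i ∈ s, c i) :=
  ⟨integrable_finsetSum _ fun i hi => (hf i hi).1, by
    rw [integral_finsetSum _ fun i hi => (hf i hi).1]
    exact Finset.sum_congr rfl fun i hi => (hf i hi).2⟩

lemma HasI.const {Ω : Type*} [MeasurableSpace Ω] {μ : Measure Ω} [IsProbabilityMeasure μ]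
    (c : ℝ) : HasI μ (fun _ => c) c := ⟨integrable_const _, by simp⟩

lemma HasI.congr' {Ω : Type*} [MeasurableSpace Ω] {μ : Measure Ω} {f g : Ω → ℝ} {c d : ℝ}
    (hf : HasI μ f c) (h : ∀ x, g x = f x) (hc : d = c) : HasI μ g d := by
  have : g = f := funext h
  rw [this, hc]; exact hf

lemma gauss_sq (v : ℝ≥0) : HasI (gaussianReal 0 v) (fun x => x * x) v := by
  have h2 := (memLp_id_gaussianReal' (μ := 0) (v := v) 2 (by simp)).integrable_sq
  refine ⟨h2.congr (ae_of_all _ fun x => by simp [sq]), ?_⟩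
  have := variance_fun_id_gaussianReal (μ := 0) (v := v)
  rw [variance_of_integral_eq_zero (by fun_prop) (by simp)] at this
  rw [← this]
  simp [sq]

lemma gauss_id (v : ℝ≥0) : HasI (gaussianReal 0 v) (fun x => x) 0 :=
  ⟨(memLp_id_gaussianReal' (μ := 0) (v := v) 1 (by simp)).integrable le_rfl,
    integral_id_gaussianReal⟩

lemma HasI.eval {ι E : Type*} [Fintype ι] [MeasurableSpace E] {μ : Measure E}
    [IsProbabilityMeasure μ] {f : E → ℝ} {c : ℝ} (hf : HasI μ f c) (i : ι) :
    HasI (Measure.pi fun _ : ι => μ) (fun x => f (x i)) c :=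
  ⟨integrable_comp_eval (μ := fun _ : ι => μ) (i := i) hf.1, by
    rw [integral_comp_eval (μ := fun _ : ι => μ) (i := i) hf.1.1, hf.2]⟩

lemma row_moment (l : ℕ) (v : ℝ≥0) (a b : Fin l) :
    HasI (Measure.pi fun _ : Fin l => gaussianReal 0 v) (fun x => x a * x b)
      (if a = b then (v : ℝ) else 0) := by
  by_cases hab : a = b
  · subst hab
    simpa using (gauss_sq v).eval a
  · rw [if_neg hab]
    have key : ∀ x : Fin l → ℝ, x a * x b =
        ∏ j, (fun j => if j = a ∨ j = b then (fun t : ℝ => t) else fun _ => 1) j (x j) := by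
      intro x
      have : ∀ j, (fun j => if j = a ∨ j = b then (fun t : ℝ => t) else fun _ => 1) j (x j) =
          if j ∈ ({a, b} : Finset (Fin l)) then x j else 1 := by
        intro j
        simp only [Finset.mem_insert, Finset.mem_singleton]
        split_ifs <;> rfl
      simp_rw [this]
      rw [Finset.prod_ite_mem, Finset.univ_inter, Finset.prod_pair hab]
    have hi : ∀ j : Fin l, Integrable
        ((fun j => if j = a ∨ j = b then (fun t : ℝ => t) else fun _ => 1) j) (gaussianReal 0 v) := by
      intro j
      dsimp only
      split_ifs
      · exact (gauss_id v).1
      · exact integrable_const 1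
    refine ⟨?_, ?_⟩
    · simp_rw [key]
      exact Integrable.fintype_prod hi
    · simp_rw [key]
      rw [integral_fintype_prod_eq_prod
        (fun j => if j = a ∨ j = b then (fun t : ℝ => t) else fun _ => 1)]
      refine Finset.prod_eq_zero (Finset.mem_univ a) ?_
      simp

lemma row_quad {l : ℕ} (v : ℝ≥0) (K : Matrix (Fin l) (Fin l) ℝ) (δ : Fin l → ℝ) :
    HasI (Measure.pi fun _ : Fin l => gaussianReal 0 v)
      (fun x => (x + δ) ⬝ᵥ (K *ᵥ (x + δ))) (v * K.trace + δ ⬝ᵥ (K *ᵥ δ)) := by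
  have h : ∀ a b : Fin l, HasI (Measure.pi fun _ : Fin l => gaussianReal 0 v)
      (fun x => K a b * (((x a * x b) + δ b * x a) + (δ a * x b + δ a * δ b)))
      (K a b * (((if a = b then (v : ℝ) else 0) + δ b * 0) + (δ a * 0 + δ a * δ b))) := by
    intro a b
    exact (((row_moment l v a b).add (((gauss_id v).eval a).cmul _)).add
      ((((gauss_id v).eval b).cmul _).add (HasI.const _))).cmul _
  refine (HasI.sum Finset.univ fun a _ => HasI.sum Finset.univ fun b _ => h a b).congr' ?_ ?_
  · intro x
    simp only [dotProduct, mulVec, Pi.add_apply, Finset.mul_sum]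
    refine Finset.sum_congr rfl fun a _ => Finset.sum_congr rfl fun b _ => ?_
    ring
  · simp only [mul_zero, add_zero, zero_add, mul_add, Finset.sum_add_distrib, mul_ite,
      Finset.sum_ite_eq, Finset.mem_univ, if_true]
    congr 1
    · simp only [trace, diag, Finset.mul_sum]
      exact Finset.sum_congr rfl fun a _ => mul_comm _ _
    · simp only [dotProduct, mulVec, Finset.mul_sum]
      refine Finset.sum_congr rfl fun a _ => Finset.sum_congr rfl fun b _ => ?_
      ring

lemma logR_hasI {n l : ℕ} (v : ℝ≥0) (M : Matrix (Fin l) (Fin l) ℝ)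
    (δ : Fin n → Fin l → ℝ) : HasI (gaussMat n l v) (logR v M δ)
      (∑ i, (Real.log |M.det| + (v * l - (v * (Mᵀ * M).trace + δ i ⬝ᵥ ((Mᵀ * M) *ᵥ δ i))) / (2 * v))) := by
  refine HasI.sum Finset.univ fun i _ => ?_
  refine HasI.eval (f := fun x => Real.log |M.det| +
    (x ⬝ᵥ x - (x + δ i) ⬝ᵥ ((Mᵀ * M) *ᵥ (x + δ i))) / (2 * v)) ?_ i
  have h1 := (row_quad v (1 : Matrix (Fin l) (Fin l) ℝ) 0).cmul (1 / (2 * (v : ℝ)))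
  have h2 := (row_quad v (Mᵀ * M) (δ i)).cmul (- (1 / (2 * (v : ℝ))))
  refine ((HasI.const (Real.log |M.det|)).add (h1.add h2)).congr' ?_ ?_
  · intro x
    simp only [add_zero, one_mulVec]
    ring
  · simp only [trace_one, Fintype.card_fin, zero_dotProduct, add_zero]
    ring

lemma channel2 {n l : ℕ} {v : ℝ≥0} (hv : v ≠ 0) {M : Matrix (Fin l) (Fin l) ℝ}
    (hM : M.det ≠ 0) (δ : Fin n → Fin l → ℝ) (G : Set (Fin n → Fin l → ℝ)) (hG : MeasurableSet G)
    (lam : ℝ) :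
    lam * (gaussMat n l v).real G ≤ n * (- Real.log |M.det| + ((Mᵀ * M).trace - l) / 2) +
      1 / (2 * v) * ∑ i, δ i ⬝ᵥ ((Mᵀ * M) *ᵥ δ i) +
      Real.exp lam * ∫ z in G, qmat v M (z + δ) := by
  obtain ⟨h1, h2⟩ := logR_hasI v M δ
  refine (channel hv hM δ G hG lam h1).trans (le_of_eq ?_)
  rw [h2]
  congr 1
  have hv' : (v : ℝ) ≠ 0 := by exact_mod_cast hv
  have : ∀ i, (Real.log |M.det| + (v * l - (v * (Mᵀ * M).trace + δ i ⬝ᵥ ((Mᵀ * M) *ᵥ δ i))) / (2 * v)) =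
      -(- Real.log |M.det| + ((Mᵀ * M).trace - l) / 2) - 1 / (2 * v) * (δ i ⬝ᵥ ((Mᵀ * M) *ᵥ δ i)) := by
    intro i
    field_simp
    ring
  simp_rw [this]
  rw [Finset.sum_sub_distrib, ← Finset.mul_sum]
  simp
  ring

lemma exists_M {l : ℕ} (D : Matrix (Fin l) (Fin l) ℝ) (hD : D.PosDef) :
    ∃ M : Matrix (Fin l) (Fin l) ℝ, M.det ≠ 0 ∧ Mᵀ * M = D⁻¹ ∧
      - Real.log |M.det| = 1 / 2 * Real.log D.det := by
  have h1 : D⁻¹.PosSemidef := hD.inv.posSemidef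
  obtain ⟨M, hM⟩ : ∃ M : Matrix (Fin l) (Fin l) ℝ, D⁻¹ = Mᵀ * M := by
    open scoped MatrixOrder in
    obtain ⟨M, hM⟩ := CStarAlgebra.nonneg_iff_eq_star_mul_self.mp h1.nonneg
    exact ⟨M, by rw [hM, star_eq_conjTranspose, conjTranspose_eq_transpose_of_trivial]⟩
  have hdet : M.det * M.det = D.det⁻¹ := by
    rw [← Ring.inverse_eq_inv', ← Matrix.det_nonsing_inv, hM, det_mul, det_transpose]
  have hpos : 0 < D.det := hD.det_pos
  have hne : M.det ≠ 0 := by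
    intro h
    rw [h] at hdet
    simp at hdet
    linarith
  refine ⟨M, hne, hM.symm, ?_⟩
  rw [Real.log_abs]
  have := congrArg Real.log hdet
  rw [Real.log_mul hne hne, Real.log_inv] at this
  linarith

lemma sum_bb {k m : ℕ} (b : Fin m → ℝ) (hb : ∑ x, b x = 0) (a a' : Fin k) :
    ∑ s : Fin k → Fin m, b (s a) * b (s a') =
      if a = a' then (m : ℝ) ^ (k - 1) * ∑ x, b x ^ 2 else 0 := by
  by_cases h : a = a'
  · subst h
    have := Fintype.sum_piFinset_apply (ι := Fin k) (fun x => b x * b x) Finset.univ a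
    simp only [Fintype.piFinset_univ, Finset.card_univ, Fintype.card_fin] at this
    rw [if_pos rfl, this]
    simp [sq]
  · rw [if_neg h]
    have key : ∀ x : Fin k → Fin m, b (x a) * b (x a') =
        ∏ j, (fun (j : Fin k) (t : Fin m) => if j = a ∨ j = a' then b t else 1) j (x j) := by
      intro x
      have : ∀ j, (fun (j : Fin k) (t : Fin m) => if j = a ∨ j = a' then b t else 1) j (x j) =
          if j ∈ ({a, a'} : Finset (Fin k)) then b (x j) else 1 := by
        intro j
        simp only [Finset.mem_insert, Finset.mem_singleton]
      simp_rw [this]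
      rw [Finset.prod_ite_mem, Finset.univ_inter, Finset.prod_pair h]
    simp_rw [key]
    rw [← Fintype.prod_sum (fun (j : Fin k) (t : Fin m) => if j = a ∨ j = a' then b t else 1)]
    refine Finset.prod_eq_zero (Finset.mem_univ a) ?_
    simpa using hb

lemma sum_quad {k l m : ℕ} (b : Fin m → ℝ) (hb : ∑ x, b x = 0) (T : Finset (Fin k))
    (W : Matrix (Fin k) (Fin l) ℝ) (K : Matrix (Fin l) (Fin l) ℝ) :
    ∑ s : Fin k → Fin m, (fun j => ∑ a ∈ T, b (s a) * W a j) ⬝ᵥ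
      (K *ᵥ (fun j => ∑ a ∈ T, b (s a) * W a j)) =
    (m : ℝ) ^ (k - 1) * (∑ x, b x ^ 2) * (K * gramSub W T).trace := by
  have h1 : ∀ s : Fin k → Fin m, (fun j => ∑ a ∈ T, b (s a) * W a j) ⬝ᵥ
      (K *ᵥ (fun j => ∑ a ∈ T, b (s a) * W a j)) =
      ∑ a ∈ T, ∑ a' ∈ T, (b (s a) * b (s a')) * (W a ⬝ᵥ (K *ᵥ W a')) := by
    intro s
    have : (fun j => ∑ a ∈ T, b (s a) * W a j) = ∑ a ∈ T, b (s a) • W a := by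
      ext j; simp
    rw [this, Matrix.mulVec_sum, sum_dotProduct]
    refine Finset.sum_congr rfl fun a _ => ?_
    rw [dotProduct_sum]
    refine Finset.sum_congr rfl fun a' _ => ?_
    rw [mulVec_smul, smul_dotProduct, dotProduct_smul]
    simp only [smul_eq_mul]; ring
  simp_rw [h1]
  rw [Finset.sum_comm]
  have h2 : ∀ a ∈ T, ∑ s : Fin k → Fin m, ∑ a' ∈ T,
      (b (s a) * b (s a')) * (W a ⬝ᵥ (K *ᵥ W a')) =
      ((m : ℝ) ^ (k - 1) * ∑ x, b x ^ 2) * (W a ⬝ᵥ (K *ᵥ W a)) := by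
    intro a ha
    rw [Finset.sum_comm]
    simp_rw [← Finset.sum_mul, sum_bb b hb]
    simp [ha]
  rw [Finset.sum_congr rfl h2, ← Finset.mul_sum]
  congr 1
  simp only [trace, diag, Matrix.mul_apply, gramSub, transpose_apply, submatrix_apply, id]
  simp_rw [dotProduct, mulVec, dotProduct]
  rw [← Finset.sum_coe_sort T, Finset.sum_comm]
  refine Finset.sum_congr rfl fun i _ => ?_
  simp_rw [Finset.mul_sum]
  rw [Finset.sum_comm]
  refine Finset.sum_congr rfl fun j _ => ?_
  refine Finset.sum_congr rfl fun a _ => ?_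
  ring

lemma trace_tmul_nonneg {α β : Type*} [Fintype α] [Fintype β] (N : Matrix α β ℝ) :
    0 ≤ (Nᵀ * N).trace := by
  simp only [trace, diag, Matrix.mul_apply, transpose_apply]
  exact Finset.sum_nonneg fun _ _ => Finset.sum_nonneg fun _ _ => mul_self_nonneg _

lemma count_le {k m : ℕ} (F : Finset (Fin m)) :
    (Finset.univ.filter fun s : Fin k → Fin m => F = Finset.univ.image s).card ≤ k ^ k := by
  by_cases hF : F.card ≤ k
  · calc _ ≤ (Fintype.piFinset fun _ : Fin k => F).card := by
          refine Finset.card_le_card fun s hs => ?_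
          simp only [Finset.mem_filter, Finset.mem_univ, true_and] at hs
          rw [Fintype.mem_piFinset]
          intro a
          rw [hs]
          exact Finset.mem_image_of_mem _ (Finset.mem_univ a)
      _ = F.card ^ k := by simp
      _ ≤ k ^ k := Nat.pow_le_pow_left hF k
  · have : (Finset.univ.filter fun s : Fin k → Fin m => F = Finset.univ.image s) = ∅ := by
      refine Finset.filter_eq_empty_iff.mpr fun s _ h => hF ?_
      rw [h]
      exact Finset.card_image_le.trans (by simp)
    rw [this]; simp

lemma sumq {k n l m : ℕ} (q : (Fin n → Fin l → ℝ) → ℝ) (hq0 : ∀ x, 0 ≤ q x) (hq1 : Integrable q)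
    (hq2 : ∫ x, q x = 1) {U : Type*} [Fintype U] [DecidableEq U] (r : (Fin k → Fin m) → U)
    (μ : (Fin k → Fin m) → (Fin n → Fin l → ℝ)) (ν : U → (Fin n → Fin l → ℝ))
    (G : (Fin k → Fin m) → Set (Fin n → Fin l → ℝ)) (hG : ∀ s, MeasurableSet (G s))
    (d : (Fin n → Fin l → ℝ) → Finset (Fin m))
    (hd : ∀ s z, z ∈ G s → d (μ s + z) = Finset.univ.image s) :
    ∑ s, ∫ z in G s, q (z + (μ s - ν (r s))) ≤ Fintype.card U * (k : ℝ) ^ k := by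
  have h1 : ∀ s, ∫ z in G s, q (z + (μ s - ν (r s))) =
      ∫ y, (G s).indicator 1 (y - μ s) * q (y - ν (r s)) := by
    intro s
    rw [← integral_indicator (hG s), ← integral_sub_right_eq_self _ (μ s)]
    congr 1
    ext y
    by_cases hy : y - μ s ∈ G s
    · simp only [Set.indicator_of_mem hy, Pi.one_apply, one_mul]
      congr 1
      abel
    · simp only [Set.indicator_of_notMem hy, zero_mul]
  have hqs : ∀ u, Integrable (fun y => q (y - ν u)) := fun u => hq1.comp_sub_right (ν u)
  have hi : ∀ s u, Integrable (fun y => (G s).indicator (1 : (Fin n → Fin l → ℝ) → ℝ) (y - μ s) * q (y - ν u)) := by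
    intro s u
    have hm : MeasurableSet ((fun y => y - μ s) ⁻¹' G s) :=
      (measurable_id.sub_const (μ s)) (hG s)
    refine ((hqs u).indicator hm).congr (ae_of_all _ fun y => ?_)
    by_cases hy : y - μ s ∈ G s
    · rw [Set.indicator_of_mem (by exact hy)]
      simp [Set.indicator_of_mem hy]
    · rw [Set.indicator_of_notMem (by exact hy)]
      simp [Set.indicator_of_notMem hy]
  have hcount : ∀ y, ∑ s, (G s).indicator (1 : (Fin n → Fin l → ℝ) → ℝ) (y - μ s) ≤ (k : ℝ) ^ k := by
    intro y
    calc ∑ s, (G s).indicator (1 : (Fin n → Fin l → ℝ) → ℝ) (y - μ s)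
        ≤ ∑ s : Fin k → Fin m, if d y = Finset.univ.image s then (1 : ℝ) else 0 := by
          refine Finset.sum_le_sum fun s _ => ?_
          by_cases hy : y - μ s ∈ G s
          · have := hd s _ hy
            rw [add_sub_cancel] at this
            rw [if_pos this]
            simp [Set.indicator_of_mem hy]
          · rw [Set.indicator_of_notMem hy]
            split_ifs <;> norm_num
      _ = ((Finset.univ.filter fun s : Fin k → Fin m => d y = Finset.univ.image s).card : ℝ) := by
          rw [Finset.sum_boole]
      _ ≤ (k : ℝ) ^ k := by exact_mod_cast count_le (d y)
  simp_rw [h1]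
  rw [← Finset.sum_fiberwise Finset.univ r]
  calc _ ≤ ∑ u : U, (k : ℝ) ^ k := by
        refine Finset.sum_le_sum fun u _ => ?_
        calc _ = ∑ s with r s = u, ∫ y, (G s).indicator 1 (y - μ s) * q (y - ν u) := by
              refine Finset.sum_congr rfl fun s hs => ?_
              rw [(Finset.mem_filter.mp hs).2]
          _ = ∫ y, ∑ s with r s = u, (G s).indicator 1 (y - μ s) * q (y - ν u) := by
              rw [integral_finsetSum _ fun s _ => hi s u]
          _ ≤ ∫ y, (k : ℝ) ^ k * q (y - ν u) := by
              refine integral_mono (integrable_finsetSum _ fun s _ => hi s u)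
                ((hqs u).const_mul _) fun y => ?_
              dsimp only
              rw [← Finset.sum_mul]
              refine mul_le_mul_of_nonneg_right ?_ (hq0 _)
              refine le_trans ?_ (hcount y)
              refine Finset.sum_le_sum_of_subset_of_nonneg (Finset.subset_univ _) fun s _ _ => ?_
              exact Set.indicator_nonneg (fun _ _ => zero_le_one) _
          _ = (k : ℝ) ^ k := by
              rw [integral_const_mul, integral_sub_right_eq_self q (ν u), hq2, mul_one]
    _ = _ := by simp

lemma gram_psd {k l : ℕ} (W : Matrix (Fin k) (Fin l) ℝ) (T : Finset (Fin k)) :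
    (gramSub W T).PosSemidef := by
  unfold gramSub
  rw [← conjTranspose_eq_transpose_of_trivial]
  exact posSemidef_conjTranspose_mul_self _

def meanF {k l m n : ℕ} (W : Matrix (Fin k) (Fin l) ℝ) (A : Matrix (Fin n) (Fin m) ℝ)
    (s : Fin k → Fin m) : Fin n → Fin l → ℝ := fun i j => ∑ a, A i (s a) * W a j

lemma core {k l m n : ℕ} (hk : 1 ≤ k) (hm : 0 < m) {va vz : ℝ≥0} (hvz : vz ≠ 0)
    (W : Matrix (Fin k) (Fin l) ℝ) (A : Matrix (Fin n) (Fin m) ℝ)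
    (hA : ∑ i, ∑ j, (A i j) ^ 2 ≤ va * (n * m)) (T : Finset (Fin k))
    (G : (Fin k → Fin m) → Set (Fin n → Fin l → ℝ)) (hG : ∀ s, MeasurableSet (G s))
    (d : (Fin n → Fin l → ℝ) → Finset (Fin m))
    (hd : ∀ s z, z ∈ G s → d (meanF W A s + z) = Finset.univ.image s) :
    T.card * Real.log m * ∑ s, (gaussMat n l vz).real (G s) ≤
      (m : ℝ) ^ k * (n * (1 / 2 * Real.log
        (Matrix.det (1 + ((va : ℝ) / (vz : ℝ)) • gramSub W T))) + (k : ℝ) ^ k) := by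
  set D : Matrix (Fin l) (Fin l) ℝ := 1 + ((va : ℝ) / (vz : ℝ)) • gramSub W T with hD
  have hDpd : D.PosDef := PosDef.one.add_posSemidef ((gram_psd W T).smul (by positivity))
  obtain ⟨M, hM0, hMK, hMdet⟩ := exists_M D hDpd
  have hv' : (0 : ℝ) < vz := by positivity
  have hm' : (0 : ℝ) < m := by exact_mod_cast hm
  set abar : Fin n → ℝ := fun i => (∑ x, A i x) / m with habar
  set b : Fin n → Fin m → ℝ := fun i x => A i x - abar i with hb
  have hb0 : ∀ i, ∑ x, b i x = 0 := by
    intro i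
    simp only [hb, habar, Finset.sum_sub_distrib, Finset.sum_const, Finset.card_univ,
      Fintype.card_fin, nsmul_eq_mul]
    field_simp
    ring
  have hb2 : ∀ i, ∑ x, b i x ^ 2 ≤ ∑ x, A i x ^ 2 := by
    intro i
    have : ∀ x, A i x ^ 2 = b i x ^ 2 + 2 * abar i * b i x + abar i ^ 2 := by
      intro x; simp only [hb]; ring
    simp_rw [this, Finset.sum_add_distrib, ← Finset.mul_sum, hb0 i]
    have : 0 ≤ ∑ x : Fin m, abar i ^ 2 := Finset.sum_nonneg fun _ _ => sq_nonneg _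
    linarith
  let r : (Fin k → Fin m) → ({a // a ∉ T} → Fin m) := fun s a => s a
  let ν : ({a // a ∉ T} → Fin m) → (Fin n → Fin l → ℝ) := fun u i j =>
    ∑ a, (if h : a ∉ T then A i (u ⟨a, h⟩) else abar i) * W a j
  have hδ : ∀ s i, (meanF W A s - ν (r s)) i = fun j => ∑ a ∈ T, b i (s a) * W a j := by
    intro s i
    ext j
    simp only [Pi.sub_apply, meanF, ν, r]
    rw [← Finset.sum_sub_distrib, ← Finset.sum_subset (Finset.subset_univ T)]
    · refine Finset.sum_congr rfl fun a ha => ?_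
      simp only [ha, not_true_eq_false, dite_false, hb]
      ring
    · intro a _ ha
      simp [ha]
  have hKtr : (Mᵀ * M).trace + (va : ℝ) / vz * ((Mᵀ * M) * gramSub W T).trace = l := by
    have : (Mᵀ * M) * D = 1 := by
      rw [hMK]
      exact Matrix.nonsing_inv_mul D (Ne.isUnit hDpd.det_pos.ne')
    have h2 := congrArg trace this
    rw [hD, mul_add, mul_one, Matrix.mul_smul, trace_add, trace_smul, trace_one] at h2
    simpa using h2
  have htr0 : 0 ≤ ((Mᵀ * M) * gramSub W T).trace := by
    rw [gramSub, ← Matrix.mul_assoc, Matrix.trace_mul_comm, Matrix.mul_assoc, ← Matrix.mul_assoc,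
      ← Matrix.transpose_transpose (W.submatrix (fun i : T => (i : Fin k)) id),
      ← Matrix.transpose_mul, Matrix.transpose_transpose]
    exact trace_tmul_nonneg _
  obtain ⟨hq1, hq2⟩ := qmat_hasInt n hvz M hM0
  have h3 := sumq (qmat vz M) (fun x => (qmat_pos hvz hM0 x).le) hq1 hq2 r (meanF W A) ν G hG d hd
  have hquad : ∑ s : Fin k → Fin m, ∑ i, (meanF W A s - ν (r s)) i ⬝ᵥ
      ((Mᵀ * M) *ᵥ (meanF W A s - ν (r s)) i) ≤
      (m : ℝ) ^ k * (va * n * ((Mᵀ * M) * gramSub W T).trace) := by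
    rw [Finset.sum_comm]
    simp_rw [hδ, sum_quad _ (hb0 _) T W]
    rw [← Finset.sum_mul, ← Finset.mul_sum]
    have : ∑ i, ∑ x, b i x ^ 2 ≤ va * (n * m) := (Finset.sum_le_sum fun i _ => hb2 i).trans hA
    have hmk : (m : ℝ) ^ k = (m : ℝ) ^ (k - 1) * m := by
      rw [← pow_succ]; congr 1; omega
    rw [hmk]
    calc _ ≤ (m : ℝ) ^ (k - 1) * (va * (n * m)) * ((Mᵀ * M) * gramSub W T).trace := by gcongr
      _ = _ := by ring
  have hsum := Finset.sum_le_sum fun s (_ : s ∈ (Finset.univ : Finset (Fin k → Fin m))) =>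
    channel2 hvz hM0 (meanF W A s - ν (r s)) (G s) (hG s) (T.card * Real.log m)
  rw [← Finset.mul_sum, Finset.sum_add_distrib, Finset.sum_add_distrib, ← Finset.mul_sum,
    ← Finset.mul_sum, Finset.sum_const, ← Finset.mul_sum] at hsum
  have hexp : Real.exp (T.card * Real.log m) = (m : ℝ) ^ T.card := by
    rw [mul_comm, Real.exp_mul, Real.exp_log hm', Real.rpow_natCast]
  have hcardU : (Fintype.card ({a // a ∉ T} → Fin m) : ℝ) * (m : ℝ) ^ T.card = (m : ℝ) ^ k := by
    rw [Fintype.card_fun, Fintype.card_fin, Fintype.card_subtype_compl]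
    simp only [Fintype.card_fin, Fintype.card_coe]
    push_cast
    rw [← pow_add, Nat.sub_add_cancel]
    simpa using T.card_le_univ
  refine hsum.trans ?_
  simp only [Finset.card_univ, Fintype.card_fun, Fintype.card_fin, nsmul_eq_mul, Nat.cast_pow]
  rw [hexp, hMdet]
  have e1 : 1 / (2 * (vz : ℝ)) * ∑ s : Fin k → Fin m, ∑ i, (meanF W A s - ν (r s)) i ⬝ᵥ
      ((Mᵀ * M) *ᵥ (meanF W A s - ν (r s)) i) ≤
      1 / (2 * (vz : ℝ)) * ((m : ℝ) ^ k * (va * n * ((Mᵀ * M) * gramSub W T).trace)) := by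
    gcongr
  have e2 := mul_le_mul_of_nonneg_left h3 (by positivity : 0 ≤ (m : ℝ) ^ T.card)
  have e3 : (m : ℝ) ^ T.card * (Fintype.card ({a // a ∉ T} → Fin m) * (k : ℝ) ^ k) =
      (m : ℝ) ^ k * (k : ℝ) ^ k := by rw [← hcardU]; ring
  have e4 : 1 / (2 * (vz : ℝ)) * ((m : ℝ) ^ k * (va * n * ((Mᵀ * M) * gramSub W T).trace)) =
      (m : ℝ) ^ k * (n * (l - (Mᵀ * M).trace) / 2) := by
    rw [← hKtr]; field_simp; ring
  rw [e3] at e2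
  rw [e4] at e1
  refine (add_le_add (add_le_add le_rfl e1) e2).trans (le_of_eq ?_)
  ring

lemma mean_eq {k l m n : ℕ} (W : Matrix (Fin k) (Fin l) ℝ) (A : Matrix (Fin n) (Fin m) ℝ)
    (e : Fin k ↪ Fin m) (z : Fin n → Fin l → ℝ) :
    A * signal W e + Matrix.of z = Matrix.of (meanF W A e + z) := by
  ext i j
  simp only [Matrix.add_apply, Matrix.mul_apply, signal, Matrix.of_apply, meanF, Pi.add_apply,
    Finset.mul_sum, mul_ite, mul_zero]
  rw [Finset.sum_comm]
  simp

lemma good_sets {k l m n : ℕ} (vz : ℝ≥0) (hkm : k ≤ m) (W : Matrix (Fin k) (Fin l) ℝ)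
    (A : Matrix (Fin n) (Fin m) ℝ) (d : Matrix (Fin n) (Fin l) ℝ → Finset (Fin m)) :
    ∃ G : (Fin k → Fin m) → Set (Fin n → Fin l → ℝ), (∀ s, MeasurableSet (G s)) ∧
      (∀ s z, z ∈ G s → d (Matrix.of (meanF W A s + z)) = Finset.univ.image s) ∧
      (m.descFactorial k : ℝ) * (1 - (errProbDet k l m n vz W A d).toReal) ≤
        ∑ s, (gaussMat n l vz).real (G s) := by
  have hsing : MeasurableSingletonClass (Fin k ↪ Fin m) := ⟨fun _ => trivial⟩
  set P := (uniformEmb k m).prod (gaussMat n l vz) with hP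
  set E : Set ((Fin k ↪ Fin m) × (Fin n → Fin l → ℝ)) :=
    {p | d (A * signal W p.1 + Matrix.of p.2) ≠ suppS p.1} with hE
  have herr : errProbDet k l m n vz W A d = P (toMeasurable P E) := by
    rw [measure_toMeasurable]; rfl
  set E' := toMeasurable P E with hE'
  have hE'm : MeasurableSet E' := measurableSet_toMeasurable _ _
  have hsec : ∀ e : Fin k ↪ Fin m, MeasurableSet (Prod.mk e ⁻¹' E') :=
    fun e => measurable_prodMk_left hE'm
  have hN : 0 < m.descFactorial k := Nat.descFactorial_pos.mpr hkm
  have hNr : (0 : ℝ) < m.descFactorial k := by exact_mod_cast hN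
  have hcard : Fintype.card (Fin k ↪ Fin m) = m.descFactorial k := by
    simp [Fintype.card_embedding_eq]
  have h1 : (errProbDet k l m n vz W A d).toReal =
      (m.descFactorial k : ℝ)⁻¹ * ∑ e : Fin k ↪ Fin m, (gaussMat n l vz).real (Prod.mk e ⁻¹' E') := by
    rw [herr, hP, Measure.prod_apply hE'm, uniformEmb, lintegral_smul_measure, lintegral_count,
      tsum_fintype, hcard]
    rw [ENNReal.smul_def, smul_eq_mul, ENNReal.toReal_mul, ENNReal.toReal_sum
      (fun e _ => measure_ne_top _ _)]
    simp [Measure.real]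
  have h2 : ∀ e : Fin k ↪ Fin m, (gaussMat n l vz).real (Prod.mk e ⁻¹' E')ᶜ =
      1 - (gaussMat n l vz).real (Prod.mk e ⁻¹' E') := fun e => by
    rw [probReal_compl_eq_one_sub (hsec e)]
  refine ⟨fun s => ⋃ e : Fin k ↪ Fin m, ⋃ _ : ⇑e = s, (Prod.mk e ⁻¹' E')ᶜ, ?_, ?_, ?_⟩
  · intro s
    exact MeasurableSet.iUnion fun e => MeasurableSet.iUnion fun _ => (hsec e).compl
  · intro s z hz
    simp only [Set.mem_iUnion] at hz
    obtain ⟨e, rfl, hz⟩ := hz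
    have hnot : (e, z) ∉ E := fun h => hz (subset_toMeasurable P E h)
    simp only [hE, Set.mem_ofPred_eq, not_not] at hnot
    rw [mean_eq] at hnot
    rw [hnot, suppS, Finset.map_eq_image]
  · have h3 : (m.descFactorial k : ℝ) * (1 - (errProbDet k l m n vz W A d).toReal) =
        ∑ e : Fin k ↪ Fin m, (gaussMat n l vz).real (Prod.mk e ⁻¹' E')ᶜ := by
      simp_rw [h2]
      rw [Finset.sum_sub_distrib, h1]
      simp only [Finset.sum_const, Finset.card_univ, hcard, nsmul_eq_mul, mul_one]
      field_simp
    rw [h3]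
    have hinj : Function.Injective (fun e : Fin k ↪ Fin m => (e : Fin k → Fin m)) :=
      DFunLike.coe_injective
    calc _ ≤ ∑ e : Fin k ↪ Fin m, (gaussMat n l vz).real
          (⋃ e' : Fin k ↪ Fin m, ⋃ _ : ⇑e' = ⇑e, (Prod.mk e' ⁻¹' E')ᶜ) := by
          refine Finset.sum_le_sum fun e _ => measureReal_mono ?_ (measure_ne_top _ _)
          exact Set.subset_iUnion₂_of_subset e rfl subset_rfl
      _ = ∑ s ∈ Finset.univ.image (fun e : Fin k ↪ Fin m => (e : Fin k → Fin m)),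
          (gaussMat n l vz).real (⋃ e' : Fin k ↪ Fin m, ⋃ _ : ⇑e' = s, (Prod.mk e' ⁻¹' E')ᶜ) := by
          rw [Finset.sum_image hinj.injOn]
      _ ≤ _ := Finset.sum_le_sum_of_subset_of_nonneg (Finset.subset_univ _)
          fun _ _ _ => measureReal_nonneg


/-- **Converse for deterministic power-constrained measurement matrices** (Appendix B).
If deterministic matrices `A^{(m)}` satisfy the Frobenius-norm power constraint
`‖A^{(m)}‖_F² / (n_m · m) ≤ σa²` and some support recovery maps achieve vanishing error
probability, then `limsup (log₂ m) / n_m ≤ c(W)`. -/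
theorem converse_deterministic
    (k l : ℕ) (hk : 1 ≤ k) (hl : 1 ≤ l)
    (va vz : ℝ≥0) (hva : 0 < va) (hvz : 0 < vz)
    (W : Matrix (Fin k) (Fin l) ℝ) (hW : ∀ i j, W i j ≠ 0)
    (n : ℕ → ℕ) (hn : ∀ m, 0 < n m)
    (A : ∀ m : ℕ, Matrix (Fin (n m)) (Fin m) ℝ)
    (hA : ∀ m : ℕ, (∑ i, ∑ j, (A m i j) ^ 2) / ((n m : ℝ) * (m : ℝ)) ≤ (va : ℝ))
    (d : ∀ m : ℕ, Matrix (Fin (n m)) (Fin l) ℝ → Finset (Fin m))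
    (hd : Tendsto (fun m : ℕ => errProbDet k l m (n m) vz W (A m) (d m)) atTop (nhds 0)) :
    limsup (fun m : ℕ => Real.logb 2 m / (n m : ℝ)) atTop ≤ cW va vz W := by
  have hne : Nonempty {T : Finset (Fin k) // T.Nonempty} :=
    ⟨⟨Finset.univ, ⟨⟨0, hk⟩, Finset.mem_univ _⟩⟩⟩
  unfold cW
  refine le_ciInf fun T => ?_
  obtain ⟨T, hT⟩ := T
  dsimp only
  set C : ℝ := 1 / 2 * Real.log
        (Matrix.det (1 + ((va : ℝ) / (vz : ℝ)) • gramSub W T)) with hC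
  have ht : (0 : ℝ) < T.card := by exact_mod_cast hT.card_pos
  set err : ℕ → ℝ := fun m => (errProbDet k l m (n m) vz W (A m) (d m)).toReal with herr
  have herr0 : Tendsto err atTop (nhds 0) := by
    have := (ENNReal.tendsto_toReal ENNReal.zero_ne_top).comp hd
    exact this
  set ρ : ℕ → ℝ := fun m => (m.descFactorial k : ℝ) / (m : ℝ) ^ k * (1 - err m) with hρ
  have hρ1 : Tendsto ρ atTop (nhds 1) := by
    have h1 : Tendsto (fun m : ℕ => (m.descFactorial k : ℝ) / (m : ℝ) ^ k) atTop (nhds 1) := by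
      have := isEquivalent_descFactorial k
      rw [Asymptotics.isEquivalent_iff_tendsto_one] at this
      · exact this
      · filter_upwards [eventually_gt_atTop 0] with m hm
        positivity
    simpa using h1.mul (tendsto_const_nhds.sub herr0)
  set η : ℕ → ℝ := fun m => T.card * ρ m - (k : ℝ) ^ k / Real.log m with hη
  have hlog : Tendsto (fun m : ℕ => Real.log m) atTop atTop :=
    Real.tendsto_log_atTop.comp tendsto_natCast_atTop_atTop
  have hη1 : Tendsto η atTop (nhds (T.card : ℝ)) := by
    simpa using (hρ1.const_mul (T.card : ℝ)).sub (hlog.const_div_atTop ((k : ℝ) ^ k))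
  have hg : Tendsto (fun m => C / η m / Real.log 2) atTop (nhds (C / T.card / Real.log 2)) :=
    (tendsto_const_nhds.div hη1 ht.ne').div_const _
  have hval : (1 / (2 * (T.card : ℝ))) *
      Real.logb 2 (Matrix.det (1 + ((va : ℝ) / (vz : ℝ)) • gramSub W T)) =
      C / T.card / Real.log 2 := by
    rw [hC, Real.logb]
    ring
  rw [hval, ← hg.limsup_eq]
  have hle : ∀ᶠ m : ℕ in atTop, Real.logb 2 m / (n m : ℝ) ≤ C / η m / Real.log 2 := by
    filter_upwards [eventually_ge_atTop k, eventually_ge_atTop 2,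
      hη1.eventually_const_lt ht] with m hkm hm2 hηm
    have hm0 : (0 : ℝ) < m := by exact_mod_cast (by omega : 0 < m)
    have hn0 : (0 : ℝ) < n m := by exact_mod_cast hn m
    have hl0 : 0 < Real.log m := Real.log_pos (by exact_mod_cast (by omega : 1 < m))
    obtain ⟨G, hG1, hG2, hG3⟩ := good_sets vz hkm W (A m) (d m)
    have hA' : ∑ i, ∑ j, (A m i j) ^ 2 ≤ va * (n m * m) :=
      (div_le_iff₀ (mul_pos hn0 hm0)).mp (hA m)
    have hcore := core hk (by omega : 0 < m) hvz.ne' W (A m) hA' T G hG1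
      (fun z => d m (Matrix.of z)) hG2
    have h1 : T.card * Real.log m * ((m : ℝ) ^ k * ρ m) ≤
        (m : ℝ) ^ k * (n m * C + (k : ℝ) ^ k) := by
      refine le_trans ?_ hcore
      refine mul_le_mul_of_nonneg_left ?_ (by positivity)
      refine le_trans (le_of_eq ?_) hG3
      simp only [hρ, herr]
      field_simp
    have h2 : T.card * Real.log m * ρ m ≤ n m * C + (k : ℝ) ^ k := by
      have hmk : (0 : ℝ) < (m : ℝ) ^ k := by positivity
      refine le_of_mul_le_mul_left ?_ hmk
      calc _ = T.card * Real.log m * ((m : ℝ) ^ k * ρ m) := by ring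
        _ ≤ _ := h1
    have h3 : Real.log m * η m ≤ n m * C := by
      have : Real.log m * η m = T.card * Real.log m * ρ m - (k : ℝ) ^ k := by
        simp only [hη]; field_simp
      linarith
    have h4 : Real.log m / n m ≤ C / η m := by
      rw [div_le_div_iff₀ hn0 hηm]
      linarith
    rw [Real.logb, div_right_comm]
    exact div_le_div_of_nonneg_right h4 (Real.log_pos (by norm_num)).le
  refine limsup_le_limsup hle ?_ hg.isBoundedUnder_le
  refine isCoboundedUnder_le_of_eventually_le atTop (x := 0) ?_
  filter_upwards [eventually_ge_atTop 1] with m hm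
  exact div_nonneg (Real.logb_nonneg (by norm_num) (by exact_mod_cast hm)) (Nat.cast_nonneg _)

end
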